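/- Let a, b > 0 and δ > 0, B ≥ 0 be real numbers and Q a natural number. Let d : ℕ → ℝ be a nonnegative sequence and f : ℕ → ℝ a nondecreasing sequence with f(Q) − f(0) ≤ B. Suppose that for every q < Q one has d(q+1) ≤ b·d(q), and that moreover d(q+1) ≤ a·d(q) whenever f(q+1) − f(q) < δ. Then d(Q) ≤ a^Q · (max(b/a, 1))^{⌊B/δ⌋} · d(0). -/

import Mathlib

/-!
Call a scale `q < Q` bad if `δ ≤ f (q + 1) - f q`. The increments of `f` are nonnegative and
telescope to at most `B`, so there are at most `⌊B / δ⌋₊` bad scales. Iterating the one-step bounds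
gives a factor `b` for each bad scale and a factor `a` for each other one, and writing
`b ≤ a * max (b / a) 1` charges the factor `a` to every scale, at the cost of one factor
`max (b / a) 1 ≥ 1` per bad scale.
-/

open Finset

section Iteration

variable {R : Type*} [CommSemiring R] [PartialOrder R] [IsOrderedRing R] {u : ℕ → R} {n : ℕ}

theorem le_prod_range_mul {c : ℕ → R} (hc : ∀ k < n, 0 ≤ c k)
    (hu : ∀ k < n, u (k + 1) ≤ c k * u k) : u n ≤ (∏ k ∈ range n, c k) * u 0 := by
  induction n with
  | zero => simp
  | succ n ih =>
    have ih' : u n ≤ (∏ k ∈ range n, c k) * u 0 :=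
      ih (fun k hk ↦ hc k (hk.trans n.lt_succ_self)) fun k hk ↦ hu k (hk.trans n.lt_succ_self)
    calc
      u (n + 1) ≤ c n * u n := hu n n.lt_succ_self
      _ ≤ c n * ((∏ k ∈ range n, c k) * u 0) :=
        mul_le_mul_of_nonneg_left ih' (hc n n.lt_succ_self)
      _ = (∏ k ∈ range (n + 1), c k) * u 0 := by rw [prod_range_succ_comm, mul_assoc]

theorem le_pow_card_filter_mul_pow_card_filter_not_mul {a b : R} (ha : 0 ≤ a) (hb : 0 ≤ b)
    {p : ℕ → Prop} [DecidablePred p] (hub : ∀ k < n, p k → u (k + 1) ≤ b * u k)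
    (hua : ∀ k < n, ¬p k → u (k + 1) ≤ a * u k) :
    u n ≤ b ^ #{k ∈ range n | p k} * a ^ #{k ∈ range n | ¬p k} * u 0 := by
  have hprod := le_prod_range_mul (u := u) (n := n) (c := fun k ↦ if p k then b else a)
    (fun k _ ↦ by split_ifs <;> assumption)
    (fun k hk ↦ by split_ifs with h; exacts [hub k hk h, hua k hk h])
  simpa only [prod_ite, prod_const] using hprod

end Iteration

theorem pow_mul_pow_le_pow_add_mul_max_div_one_pow {K : Type*} [Semifield K] [LinearOrder K]
    [IsStrictOrderedRing K] {a b : K} (ha : 0 < a) (hb : 0 ≤ b) (m n : ℕ) :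
    b ^ m * a ^ n ≤ a ^ (m + n) * max (b / a) 1 ^ m := by
  have hb_le : b ≤ a * max (b / a) 1 := (div_le_iff₀' ha).1 (le_max_left _ _)
  calc
    b ^ m * a ^ n ≤ (a * max (b / a) 1) ^ m * a ^ n := by gcongr
    _ = a ^ (m + n) * max (b / a) 1 ^ m := by ring

/-- The scales `q < n` with density drop at least `δ`, for a density ratio `f` indexed by scale. As
`f` is nondecreasing in the index, the drop at `q` is encoded as the increment
`f (q + 1) - f q`. -/
def dropScales {G : Type*} [AddCommGroup G] [LinearOrder G] (f : ℕ → G) (δ : G) (n : ℕ) :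
    Finset ℕ :=
  {q ∈ range n | δ ≤ f (q + 1) - f q}

theorem card_dropScales_nsmul_le {G : Type*} [AddCommGroup G] [LinearOrder G]
    [IsOrderedAddMonoid G] {f : ℕ → G} {n : ℕ} (hf : MonotoneOn f (Set.Iic n)) (δ : G) :
    #(dropScales f δ n) • δ ≤ f n - f 0 := by
  have hincr : ∀ q ∈ range n, 0 ≤ f (q + 1) - f q := fun q hq ↦
    have hqn : q + 1 ≤ n := mem_range.1 hq
    sub_nonneg.2 (hf (q.le_succ.trans hqn) hqn q.le_succ)
  calc
    #(dropScales f δ n) • δ ≤ ∑ q ∈ dropScales f δ n, (f (q + 1) - f q) :=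
      card_nsmul_le_sum _ _ _ fun q hq ↦ (mem_filter.1 hq).2
    _ ≤ ∑ q ∈ range n, (f (q + 1) - f q) :=
      sum_le_sum_of_subset_of_nonneg (filter_subset _ _) fun q hq _ ↦ hincr q hq
    _ = f n - f 0 := sum_range_sub f n

theorem card_dropScales_le_floor_div {K : Type*} [Field K] [LinearOrder K] [IsStrictOrderedRing K]
    [FloorSemiring K] {f : ℕ → K} {n : ℕ} {δ B : K} (hδ : 0 < δ) (hf : MonotoneOn f (Set.Iic n))
    (hB : f n - f 0 ≤ B) : #(dropScales f δ n) ≤ ⌊B / δ⌋₊ := by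
  refine Nat.le_floor ((le_div_iff₀ hδ).2 ?_)
  rw [← nsmul_eq_mul]
  exact (card_dropScales_nsmul_le hf δ).trans hB

theorem two_regime_with_density_drop_general {K L : Type*}
    [Semifield K] [LinearOrder K] [IsStrictOrderedRing K]
    [Field L] [LinearOrder L] [IsStrictOrderedRing L] [FloorSemiring L]
    {a b : K} {δ B : L} (ha : 0 < a) (hb : 0 ≤ b) (hδ : 0 < δ)
    {Q : ℕ} {d : ℕ → K} {f : ℕ → L} (hd : 0 ≤ d 0) (hf : MonotoneOn f (Set.Iic Q))
    (htot : f Q - f 0 ≤ B)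
    (hstepb : ∀ q < Q, δ ≤ f (q + 1) - f q → d (q + 1) ≤ b * d q)
    (hstepa : ∀ q < Q, f (q + 1) - f q < δ → d (q + 1) ≤ a * d q) :
    d Q ≤ a ^ Q * max (b / a) 1 ^ ⌊B / δ⌋₊ * d 0 := by
  have hsplit : #(dropScales f δ Q) + #{q ∈ range Q | ¬δ ≤ f (q + 1) - f q} = Q := by
    rw [dropScales, card_filter_add_card_filter_not, card_range]
  calc
    d Q ≤ b ^ #(dropScales f δ Q) * a ^ #{q ∈ range Q | ¬δ ≤ f (q + 1) - f q} * d 0 :=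
      le_pow_card_filter_mul_pow_card_filter_not_mul ha.le hb hstepb fun q hq h ↦
        hstepa q hq (not_le.1 h)
    _ ≤ a ^ Q * max (b / a) 1 ^ #(dropScales f δ Q) * d 0 := by
      grw [pow_mul_pow_le_pow_add_mul_max_div_one_pow ha hb, hsplit]
    _ ≤ a ^ Q * max (b / a) 1 ^ ⌊B / δ⌋₊ * d 0 := by
      gcongr
      exacts [le_max_right _ _, card_dropScales_le_floor_div hδ hf htot]

/-- Combined two-regime iteration with density-drop counting: if `d` is nonnegative with
`d(q+1) ≤ b·d(q)` for all `q < Q` and `d(q+1) ≤ a·d(q)` whenever the nondecreasing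
density `f` satisfies `f(q+1) − f(q) < δ`, and `f(Q) − f(0) ≤ B`, then
`d(Q) ≤ a^Q · (max(b/a,1))^⌊B/δ⌋ · d(0)`. -/
theorem two_regime_with_density_drop (a b δ B : ℝ)
    (ha : 0 < a) (hb : 0 < b) (hδ : 0 < δ) (hB : 0 ≤ B)
    (Q : ℕ) (d f : ℕ → ℝ) (hd : ∀ q, 0 ≤ d q) (hf : Monotone f)
    (htot : f Q - f 0 ≤ B)
    (hstepb : ∀ q < Q, d (q + 1) ≤ b * d q)
    (hstepa : ∀ q < Q, f (q + 1) - f q < δ → d (q + 1) ≤ a * d q) :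
    d Q ≤ a ^ Q * max (b / a) 1 ^ (⌊B / δ⌋₊) * d 0 :=
  two_regime_with_density_drop_general ha hb.le hδ (hd 0) (hf.monotoneOn _) htot
    (fun q hq _ ↦ hstepb q hq) hstepa
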